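/- For every structure A and every fragment 𝔸 of L_{∞,ω} (a set of formulas closed under negation and subformulas), there is an elementary extension G of A that is 𝔸-generic: for every ψ ∈ 𝔸 and tuple ā ∈ G, G decides ψ(ā). -/

import Mathlib

open FirstOrder

universe u

namespace InfinitaryForcing

variable (L : FirstOrder.Language.{u, u})

/-- Infinitary formulas of `L_{∞,ω}`: set-indexed conjunctions and disjunctions,
finitary quantification, free variables among `Fin n`. -/
inductive InfForm : ℕ → Type (u + 1)
  | equal {n : ℕ} (t₁ t₂ : L.Term (Fin n)) : InfForm n
  | rel {n l : ℕ} (R : L.Relations l) (ts : Fin l → L.Term (Fin n)) : InfForm n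
  | not {n : ℕ} (φ : InfForm n) : InfForm n
  | disj {n : ℕ} {ι : Type u} (Φ : ι → InfForm n) : InfForm n
  | conj {n : ℕ} {ι : Type u} (Φ : ι → InfForm n) : InfForm n
  | ex {n : ℕ} (φ : InfForm (n + 1)) : InfForm n
  | all {n : ℕ} (φ : InfForm (n + 1)) : InfForm n

variable {L}

/-- Tarskian satisfaction for infinitary formulas. -/
def Realize : ∀ {n : ℕ}, InfForm L n → ∀ (M : Type u), L.Structure M → (Fin n → M) → Prop
  | _, .equal t₁ t₂, _M, S, v => letI := S; t₁.realize v = t₂.realize v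
  | _, .rel R ts, _M, S, v => letI := S; Language.Structure.RelMap R fun i => (ts i).realize v
  | _, .not φ, M, S, v => ¬ Realize φ M S v
  | _, .disj Φ, M, S, v => ∃ i, Realize (Φ i) M S v
  | _, .conj Φ, M, S, v => ∀ i, Realize (Φ i) M S v
  | _, .ex φ, M, S, v => ∃ b : M, Realize φ M S (Fin.snoc v b)
  | _, .all φ, M, S, v => ∀ b : M, Realize φ M S (Fin.snoc v b)

/-- Elementary embeddings, with the structures made explicit. -/
abbrev ElemEmb (M N : Type u) (SM : L.Structure M) (SN : L.Structure N) : Type u :=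
  @FirstOrder.Language.ElementaryEmbedding L M N SM SN

/-- The strong forcing relation `A ⊩ ψ(ā)`, where conditions are structures
ordered by elementary extension. -/
def Forces : ∀ {n : ℕ}, InfForm L n → ∀ (M : Type u), L.Structure M → (Fin n → M) → Prop
  | _, .equal t₁ t₂, _M, S, v => letI := S; t₁.realize v = t₂.realize v
  | _, .rel R ts, _M, S, v => letI := S; Language.Structure.RelMap R fun i => (ts i).realize v
  | _, .not φ, M, S, v =>
      ∀ (N : Type u) (SN : L.Structure N) (f : ElemEmb M N S SN),
        ¬ Forces φ N SN (fun i => f.toFun (v i))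
  | _, .disj Φ, M, S, v => ∃ i, Forces (Φ i) M S v
  | _, .conj Φ, M, S, v =>
      ∀ (N : Type u) (SN : L.Structure N) (f : ElemEmb M N S SN) (i : _),
        ∃ (P : Type u) (SP : L.Structure P) (g : ElemEmb N P SN SP),
          Forces (Φ i) P SP (fun k => g.toFun (f.toFun (v k)))
  | _, .ex φ, M, S, v => ∃ b : M, Forces φ M S (Fin.snoc v b)
  | _, .all φ, M, S, v =>
      ∀ (N : Type u) (SN : L.Structure N) (f : ElemEmb M N S SN) (b : N),
        ∃ (P : Type u) (SP : L.Structure P) (g : ElemEmb N P SN SP),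
          Forces φ P SP (Fin.snoc (fun k => g.toFun (f.toFun (v k))) (g.toFun b))

/-- `M` decides `ψ(v)` if it strongly forces `ψ(v)` or `¬ψ(v)`. -/
def Decides {n : ℕ} (ψ : InfForm L n) (M : Type u) (S : L.Structure M) (v : Fin n → M) : Prop :=
  Forces ψ M S v ∨ Forces ψ.not M S v

/-- The weak forcing relation `A ⊩* ψ := A ⊩ ¬¬ψ`. -/
def WForces {n : ℕ} (ψ : InfForm L n) (M : Type u) (S : L.Structure M) (v : Fin n → M) : Prop :=
  Forces ψ.not.not M S v

variable (L)

/-- Finitary (`L_{ω,ω}`) formulas among the infinitary ones. -/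
inductive InfForm.IsFinitary : ∀ {n : ℕ}, InfForm L n → Prop
  | equal {n} (t₁ t₂ : L.Term (Fin n)) : IsFinitary (.equal t₁ t₂)
  | rel {n l} (R : L.Relations l) (ts : Fin l → L.Term (Fin n)) : IsFinitary (.rel R ts)
  | not {n} {φ : InfForm L n} : IsFinitary φ → IsFinitary φ.not
  | disj {n} {ι : Type u} (_ : Finite ι) {Φ : ι → InfForm L n} :
      (∀ i, IsFinitary (Φ i)) → IsFinitary (.disj Φ)
  | conj {n} {ι : Type u} (_ : Finite ι) {Φ : ι → InfForm L n} :
      (∀ i, IsFinitary (Φ i)) → IsFinitary (.conj Φ)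
  | ex {n} {φ : InfForm L (n + 1)} : IsFinitary φ → IsFinitary φ.ex
  | all {n} {φ : InfForm L (n + 1)} : IsFinitary φ → IsFinitary φ.all

/-- Quantifier-free infinitary formulas. -/
inductive InfForm.IsQF : ∀ {n : ℕ}, InfForm L n → Prop
  | equal {n} (t₁ t₂ : L.Term (Fin n)) : IsQF (.equal t₁ t₂)
  | rel {n l} (R : L.Relations l) (ts : Fin l → L.Term (Fin n)) : IsQF (.rel R ts)
  | not {n} {φ : InfForm L n} : IsQF φ → IsQF φ.not
  | disj {n} {ι : Type u} {Φ : ι → InfForm L n} : (∀ i, IsQF (Φ i)) → IsQF (.disj Φ)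
  | conj {n} {ι : Type u} {Φ : ι → InfForm L n} : (∀ i, IsQF (Φ i)) → IsQF (.conj Φ)

/-- `L_{ω₁,ω}` formulas: all conjunctions and disjunctions are countable. -/
inductive InfForm.IsCtble : ∀ {n : ℕ}, InfForm L n → Prop
  | equal {n} (t₁ t₂ : L.Term (Fin n)) : IsCtble (.equal t₁ t₂)
  | rel {n l} (R : L.Relations l) (ts : Fin l → L.Term (Fin n)) : IsCtble (.rel R ts)
  | not {n} {φ : InfForm L n} : IsCtble φ → IsCtble φ.not
  | disj {n} {ι : Type u} (_ : Countable ι) {Φ : ι → InfForm L n} :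
      (∀ i, IsCtble (Φ i)) → IsCtble (.disj Φ)
  | conj {n} {ι : Type u} (_ : Countable ι) {Φ : ι → InfForm L n} :
      (∀ i, IsCtble (Φ i)) → IsCtble (.conj Φ)
  | ex {n} {φ : InfForm L (n + 1)} : IsCtble φ → IsCtble φ.ex
  | all {n} {φ : InfForm L (n + 1)} : IsCtble φ → IsCtble φ.all

/-- A fragment of `L_{∞,ω}`: a family of sets of formulas closed under negation
and subformulas. -/
structure IsFragment (𝔸 : ∀ n : ℕ, Set (InfForm L n)) : Prop where
  not_mem : ∀ {n} {φ : InfForm L n}, φ ∈ 𝔸 n → φ.not ∈ 𝔸 n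
  of_not : ∀ {n} {φ : InfForm L n}, φ.not ∈ 𝔸 n → φ ∈ 𝔸 n
  of_disj : ∀ {n} {ι : Type u} {Φ : ι → InfForm L n}, InfForm.disj Φ ∈ 𝔸 n → ∀ i, Φ i ∈ 𝔸 n
  of_conj : ∀ {n} {ι : Type u} {Φ : ι → InfForm L n}, InfForm.conj Φ ∈ 𝔸 n → ∀ i, Φ i ∈ 𝔸 n
  of_ex : ∀ {n} {φ : InfForm L (n + 1)}, φ.ex ∈ 𝔸 n → φ ∈ 𝔸 (n + 1)
  of_all : ∀ {n} {φ : InfForm L (n + 1)}, φ.all ∈ 𝔸 n → φ ∈ 𝔸 (n + 1)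

variable {L}

/-- `G` is `𝔸`-generic if it decides every instance of every formula of `𝔸`. -/
def IsGeneric (𝔸 : ∀ n : ℕ, Set (InfForm L n)) (G : Type u) (SG : L.Structure G) : Prop :=
  ∀ (n : ℕ) (ψ : InfForm L n), ψ ∈ 𝔸 n → ∀ v : Fin n → G, Decides ψ G SG v

variable (L)

mutual
  /-- Finitary `∃ₙ` formulas: `n` alternating blocks of quantifiers beginning
  with existentials, counting finite conjunctions/disjunctions as free. -/
  inductive IsEx : ℕ → ∀ {k : ℕ}, InfForm L k → Prop
    | equal {m k} (t₁ t₂ : L.Term (Fin k)) : IsEx m (.equal t₁ t₂)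
    | rel {m k l} (R : L.Relations l) (ts : Fin l → L.Term (Fin k)) : IsEx m (.rel R ts)
    | not {m k} {φ : InfForm L k} : IsAll m φ → IsEx m φ.not
    | disj {m k} {ι : Type u} (_ : Finite ι) {Φ : ι → InfForm L k} :
        (∀ i, IsEx m (Φ i)) → IsEx m (.disj Φ)
    | conj {m k} {ι : Type u} (_ : Finite ι) {Φ : ι → InfForm L k} :
        (∀ i, IsEx m (Φ i)) → IsEx m (.conj Φ)
    | ex {m k} {φ : InfForm L (k + 1)} : IsEx m φ → 1 ≤ m → IsEx m φ.ex
    | exStep {m k} {φ : InfForm L (k + 1)} : IsAll m φ → IsEx (m + 1) φ.ex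

  /-- Finitary `∀ₙ` formulas. -/
  inductive IsAll : ℕ → ∀ {k : ℕ}, InfForm L k → Prop
    | equal {m k} (t₁ t₂ : L.Term (Fin k)) : IsAll m (.equal t₁ t₂)
    | rel {m k l} (R : L.Relations l) (ts : Fin l → L.Term (Fin k)) : IsAll m (.rel R ts)
    | not {m k} {φ : InfForm L k} : IsEx m φ → IsAll m φ.not
    | disj {m k} {ι : Type u} (_ : Finite ι) {Φ : ι → InfForm L k} :
        (∀ i, IsAll m (Φ i)) → IsAll m (.disj Φ)
    | conj {m k} {ι : Type u} (_ : Finite ι) {Φ : ι → InfForm L k} :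
        (∀ i, IsAll m (Φ i)) → IsAll m (.conj Φ)
    | all {m k} {φ : InfForm L (k + 1)} : IsAll m φ → 1 ≤ m → IsAll m φ.all
    | allStep {m k} {φ : InfForm L (k + 1)} : IsEx m φ → IsAll (m + 1) φ.all
end

/-- `f : A → B` is an `n`-elementary map (`A ⪯ₙ B` when `f` is an inclusion):
every finitary `∃ₙ` or `∀ₙ` formula transfers along `f`. -/
def IsNElemMap (n : ℕ) {A B : Type u} (SA : L.Structure A) (SB : L.Structure B)
    (f : A → B) : Prop :=
  ∀ (k : ℕ) (φ : InfForm L k), (IsEx L n φ ∨ IsAll L n φ) →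
    ∀ v : Fin k → A, Realize φ A SA v ↔ Realize φ B SB (fun i => f (v i))

/-- `f : A → B` is an elementary map: every finitary formula transfers along `f`. -/
def IsElemMap {A B : Type u} (SA : L.Structure A) (SB : L.Structure B)
    (f : A → B) : Prop :=
  ∀ (k : ℕ) (φ : InfForm L k), InfForm.IsFinitary L φ →
    ∀ v : Fin k → A, Realize φ A SA v ↔ Realize φ B SB (fun i => f (v i))

/-!
A single structure `G` can be made generic for all of `L_{∞,ω}` at once: it is enough that `G` be
`ω`-saturated, in the sense that every first-order type over a finite tuple of `G` which is realized
in an elementary extension is already realized in `G`.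

Structures amalgamate elementarily over tuples of the same first-order type, and strong forcing
passes to elementary extensions. Hence tuples of the same type never force contradictory formulas.
If `G` is `ω`-saturated and an extension of `G` forces `ψ(ā, c)`, replace `c` by some `b ∈ G` with
`ā b` of the same type as `ā c`; this lets one decide `∃ x ψ` and `∀ x ψ` by looking only at the
instances `ψ(ā, b)` with `b ∈ G`, so that `G` decides every formula by induction.

An `ω`-saturated elementary extension is the union of an elementary chain of length `ω` in which
each structure realizes all `1`-types over its predecessor.
-/

open FirstOrder.Language

universe u₁ u₂ u₃

section SameType

variable {L : FirstOrder.Language.{u₁, u₂}} {α : Type*} {γ : Type*} {M : Type*} {N : Type*}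
  {P : Type*} [L.Structure M] [L.Structure N] [L.Structure P]

variable (L) in
/-- The tuples `v` of `M` and `w` of `N`, of arbitrary length, have the same complete first-order
type over `∅`; this is the relation along which structures are amalgamated. -/
def SameType (v : α → M) (w : α → N) : Prop :=
  ∀ φ : L.Formula α, φ.Realize v ↔ φ.Realize w

namespace SameType

theorem of_imp {v : α → M} {w : α → N} (h : ∀ φ : L.Formula α, φ.Realize v → φ.Realize w) :
    SameType L v w :=
  fun φ => ⟨h φ, fun hw => by_contra fun hv => h φ.not hv hw⟩

theorem of_elementaryEmbedding (f : M ↪ₑ[L] N) (v : α → M) : SameType L v (f ∘ v) :=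
  fun φ => (f.map_formula φ v).symm

theorem symm {v : α → M} {w : α → N} (h : SameType L v w) : SameType L w v :=
  fun φ => (h φ).symm

theorem trans {v : α → M} {w : α → N} {x : α → P} (h : SameType L v w)
    (h' : SameType L w x) : SameType L v x :=
  fun φ => (h φ).trans (h' φ)

theorem comp {v : α → M} {w : α → N} (h : SameType L v w) (s : γ → α) :
    SameType L (v ∘ s) (w ∘ s) := fun φ => by
  simpa only [Formula.realize_relabel] using h (φ.relabel s)

theorem eq_iff {v : α → M} {w : α → N} (h : SameType L v w) (i j : α) :
    v i = v j ↔ w i = w j := by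
  simpa only [Formula.realize_equal, Term.realize_var]
    using h ((Term.var i).equal (Term.var j))

/-- The elementary embedding given by a map `e` such that the enumeration of all elements of `M`
by themselves and its image under `e` have the same type; it turns amalgamation of types into
amalgamation of structures. -/
def toElementaryEmbedding {e : M → N} (h : SameType L id e) : M ↪ₑ[L] N where
  toFun := e
  map_formula' _ φ x := (h.comp x φ).symm

theorem exists_realize_of_finite [Finite γ] {v : α → M} {w : α → N} (h : SameType L v w)
    (φ : L.Formula (α ⊕ γ)) {c : γ → N} (hc : φ.Realize (Sum.elim w c)) :
    ∃ b : γ → M, φ.Realize (Sum.elim v b) :=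
  Formula.realize_iExs.1 ((h (φ.iExs γ)).2 (Formula.realize_iExs.2 ⟨c, hc⟩))

theorem nonempty {v : α → M} {w : α → N} (h : SameType L v w) [hN : Nonempty N] : Nonempty M :=
  have ⟨b, _⟩ := h.exists_realize_of_finite (γ := Unit) ⊤ (c := fun _ => hN.some) (by
    simp only [Formula.Realize, BoundedFormula.realize_top])
  ⟨b ()⟩

theorem exists_realize {v : α → M} {w : α → N} (h : SameType L v w)
    (φ : L.Formula (α ⊕ γ)) {c : γ → N} (hc : φ.Realize (Sum.elim w c)) :
    ∃ b : γ → M, φ.Realize (Sum.elim v b) := by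
  classical
  rcases isEmpty_or_nonempty γ with _ | ⟨⟨x₀⟩⟩
  · exact h.exists_realize_of_finite φ hc
  have : Nonempty N := ⟨c x₀⟩
  have : Nonempty M := h.nonempty
  let Free := {x : γ // Sum.inr x ∈ φ.freeVarFinset}
  have : Finite Free := Finite.of_injective
    (fun x => (⟨Sum.inr x.1, x.2⟩ : φ.freeVarFinset)) fun _ _ hxy =>
      Subtype.ext (Sum.inr_injective (congrArg Subtype.val hxy))
  let s : φ.freeVarFinset → α ⊕ Free
    | ⟨Sum.inl a, _⟩ => Sum.inl a
    | ⟨Sum.inr x, hx⟩ => Sum.inr ⟨x, hx⟩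
  let φ' : L.Formula (α ⊕ Free) := BoundedFormula.restrictFreeVar φ s
  have hφ' : φ'.Realize (Sum.elim w fun x : Free => c x) :=
    (BoundedFormula.realize_restrictFreeVar _ (by rintro ⟨_ | _, _⟩ <;> rfl)).2 hc
  obtain ⟨b, hb⟩ := h.exists_realize_of_finite φ' hφ'
  refine ⟨Function.extend Subtype.val b (Function.const γ (Classical.arbitrary M)), ?_⟩
  refine (BoundedFormula.realize_restrictFreeVar _ ?_).1 hb
  rintro ⟨a | x, hx⟩
  · rfl
  · exact (Subtype.val_injective.extend_apply b _ ⟨x, hx⟩).symm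

theorem exists_realize_forall {v : α → M} {w : α → N} (h : SameType L v w)
    {Δ : Set (L.Formula (α ⊕ γ))} (hΔ : Δ.Finite) {c : γ → N}
    (hc : ∀ φ ∈ Δ, φ.Realize (Sum.elim w c)) :
    ∃ b : γ → M, ∀ φ ∈ Δ, φ.Realize (Sum.elim v b) := by
  have : Finite Δ := hΔ
  obtain ⟨b, hb⟩ := h.exists_realize (Formula.iInf fun φ : Δ => φ.1)
    (Formula.realize_iInf.2 fun φ => hc φ.1 φ.2)
  exact ⟨b, fun φ hφ => Formula.realize_iInf.1 hb ⟨φ, hφ⟩⟩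

end SameType

end SameType

section Compactness

/-- The diagonal embedding of a structure into an ultrapower, which is elementary by Łoś's
theorem; compactness over a structure is obtained from it. -/
def diagonalEmbedding {L : FirstOrder.Language.{u₁, u₂}} {ι : Type*} (U : Ultrafilter ι) (M : Type*)
    [L.Structure M] [Nonempty M] : M ↪ₑ[L] (U : Filter ι).Product fun _ => M where
  toFun m := ((fun _ => m : ι → M) : (U : Filter ι).Product fun _ => M)
  map_formula' _ φ x :=
    (Ultraproduct.realize_formula_cast φ fun i _ => x i).trans Filter.eventually_const

variable {L : FirstOrder.Language.{u, u}} {M : Type u} [L.Structure M]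

theorem exists_elementaryExtension_realize_of_nonempty [Nonempty M] {β : Type u}
    {Γ : Set (L.Formula (M ⊕ β))}
    (h : ∀ Δ ⊆ Γ, Δ.Finite → ∃ e : β → M, ∀ φ ∈ Δ, φ.Realize (Sum.elim id e)) :
    ∃ (P : Type u) (_ : L.Structure P) (f : M ↪ₑ[L] P) (e : β → P),
      ∀ φ ∈ Γ, φ.Realize (Sum.elim f e) := by
  choose e he using fun K : Finset Γ =>
    h (Subtype.val '' (K : Set Γ)) (Subtype.coe_image_subset Γ _) (K.finite_toSet.image _)
  let U : Ultrafilter (Finset Γ) := Ultrafilter.of Filter.atTop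
  let e' : M ⊕ β → Finset Γ → M := Sum.elim (fun m _ => m) fun b K => e K b
  have elim_e (K : Finset Γ) : Sum.elim id (e K) = fun i => e' i K := by
    ext (_ | _) <;> rfl
  refine ⟨(U : Filter (Finset Γ)).Product fun _ => M, inferInstance, diagonalEmbedding U M,
    fun b => ((e' (Sum.inr b) : Finset Γ → M) : (U : Filter (Finset Γ)).Product fun _ => M),
    fun φ hφ => ?_⟩
  have eventually_realize : ∀ᶠ K in (U : Filter (Finset Γ)), φ.Realize fun i => e' i K := by
    refine Ultrafilter.of_le _ ((Filter.eventually_ge_atTop {⟨φ, hφ⟩}).mono fun K hK => ?_)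
    rw [← elim_e]
    exact he K φ ⟨⟨φ, hφ⟩, hK (Finset.mem_singleton_self _), rfl⟩
  convert! (Ultraproduct.realize_formula_cast φ e').2 eventually_realize using 1
  ext (_ | _) <;> rfl

theorem exists_elementaryExtension_realize {β : Type u} {Γ : Set (L.Formula (M ⊕ β))}
    (h : ∀ Δ ⊆ Γ, Δ.Finite → ∃ e : β → M, ∀ φ ∈ Δ, φ.Realize (Sum.elim id e)) :
    ∃ (P : Type u) (_ : L.Structure P) (f : M ↪ₑ[L] P) (e : β → P),
      ∀ φ ∈ Γ, φ.Realize (Sum.elim f e) := by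
  rcases isEmpty_or_nonempty M with _ | _
  · obtain ⟨e, -⟩ := h ∅ (Set.empty_subset Γ) Set.finite_empty
    refine ⟨M, inferInstance, .refl L M, e, fun φ hφ => ?_⟩
    obtain ⟨e', he'⟩ := h {φ} (Set.singleton_subset_iff.2 hφ) (Set.finite_singleton φ)
    rw [Subsingleton.elim e e']
    exact he' φ rfl
  · exact exists_elementaryExtension_realize_of_nonempty h

theorem exists_amalgam_family {ι : Type u} {N : ι → Type u} [∀ i, L.Structure (N i)]
    {α : ι → Type*} {v : ∀ i, α i → M} {w : ∀ i, α i → N i}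
    (h : ∀ i, SameType L (v i) (w i)) :
    ∃ (P : Type u) (_ : L.Structure P) (f : M ↪ₑ[L] P) (g : ∀ i, N i ↪ₑ[L] P),
      ∀ i, f ∘ v i = g i ∘ w i := by
  let toParams : (Σ i, L.Formula (α i ⊕ N i)) → L.Formula (M ⊕ Σ i, N i) :=
    fun φ => φ.2.relabel (Sum.map (v φ.1) (Sigma.mk φ.1))
  let Γ := toParams '' {φ | φ.2.Realize (Sum.elim (w φ.1) id)}
  have realize_toParams {Q : Type u} [L.Structure Q] (f : M → Q) (e : (Σ i, N i) → Q) (i : ι)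
      (φ : L.Formula (α i ⊕ N i)) :
      (toParams ⟨i, φ⟩).Realize (Sum.elim f e) ↔
        φ.Realize (Sum.elim (f ∘ v i) (e ∘ Sigma.mk i)) := by
    simp only [toParams, Formula.realize_relabel, Sum.elim_comp_map]
  have finitely_satisfiable : ∀ Δ ⊆ Γ, Δ.Finite →
      ∃ e : (Σ i, N i) → M, ∀ φ ∈ Δ, φ.Realize (Sum.elim id e) := by
    intro Δ hΔΓ hΔ
    obtain ⟨T, hTΓ, hT, rfl⟩ := Set.exists_subset_image_finite_and.1 ⟨Δ, hΔΓ, hΔ, rfl⟩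
    choose e he using fun i => (h i).exists_realize_forall
      (hT.preimage (f := Sigma.mk i) sigma_mk_injective.injOn) fun φ hφ => hTΓ hφ
    refine ⟨fun x => e x.1 x.2, ?_⟩
    rintro _ ⟨⟨i, φ⟩, hφ, rfl⟩
    exact (realize_toParams _ _ _ _).2 (he i φ hφ)
  obtain ⟨P, SP, f, e, he⟩ := exists_elementaryExtension_realize finitely_satisfiable
  have sameType (i : ι) :
      SameType L (Sum.elim (w i) id) (Sum.elim (f ∘ v i) (e ∘ Sigma.mk i)) :=
    .of_imp fun φ hφ => (realize_toParams _ _ _ _).1 (he _ ⟨⟨i, φ⟩, hφ, rfl⟩)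
  refine ⟨P, SP, f, fun i => ((sameType i).comp Sum.inr).toElementaryEmbedding, fun i => ?_⟩
  ext a
  exact ((sameType i).eq_iff (Sum.inl a) (Sum.inr (w i a))).1 rfl

theorem SameType.exists_amalgam {N : Type u} [L.Structure N] {α : Type*} {v : α → M} {w : α → N}
    (h : SameType L v w) :
    ∃ (P : Type u) (_ : L.Structure P) (f : M ↪ₑ[L] P) (g : N ↪ₑ[L] P), f ∘ v = g ∘ w :=
  have ⟨P, SP, f, g, hfg⟩ := exists_amalgam_family fun _ : PUnit => h
  ⟨P, SP, f, g ⟨⟩, hfg ⟨⟩⟩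

variable (L M) in
theorem exists_elementaryExtension_realizing_types :
    ∃ (P : Type u) (_ : L.Structure P) (g : M ↪ₑ[L] P),
      ∀ (N : Type u) [L.Structure N] (f : M ↪ₑ[L] N) (c : N), ∃ b : P,
        SameType L (Sum.elim g fun _ : Unit => b) (Sum.elim f fun _ => c) := by
  -- The realized types form a set in `Type u`, although the extensions realizing them do not.
  let Realized := {p : Set (L.Formula (M ⊕ Unit)) //
    ∃ (N : Type u) (_ : L.Structure N) (f : M ↪ₑ[L] N) (c : N),
      p = {φ | φ.Realize (Sum.elim f fun _ => c)}}
  choose N SN f c hc using fun p : Realized => p.2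
  obtain ⟨P, SP, g, g', hg⟩ :=
    exists_amalgam_family fun p : Realized => SameType.of_elementaryEmbedding (f p) id
  refine ⟨P, SP, g, fun N' SN' f' c' => ?_⟩
  let p : Realized := ⟨_, N', SN', f', c', rfl⟩
  have sameType_fc : SameType L (Sum.elim (f p) fun _ => c p) (Sum.elim f' fun _ : Unit => c') :=
    fun φ => Set.ext_iff.1 (hc p).symm φ
  have comp_fc : g' p ∘ Sum.elim (f p) (fun _ : Unit => c p) = Sum.elim g fun _ => g' p (c p) := by
    rw [Sum.comp_elim]
    exact congrArg (Sum.elim · _) (hg p).symm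
  exact ⟨g' p (c p), comp_fc ▸ (SameType.of_elementaryEmbedding (g' p) _).symm.trans sameType_fc⟩

end Compactness

section ElementaryChain

variable {L : FirstOrder.Language.{u₁, u₂}}

section DirectLimit

variable {ι : Type*} [Preorder ι] [IsDirectedOrder ι] [Nonempty ι] {G : ι → Type*}
  [∀ i, L.Structure (G i)] {f : ∀ i j, i ≤ j → G i ↪[L] G j}
  [DirectedSystem G fun i j h => f i j h]

theorem realize_comp_directLimit_of
    (hf : ∀ i j h, ∃ e : G i ↪ₑ[L] G j, e.toEmbedding = f i j h) {α : Type*} {n : ℕ}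
    (φ : L.BoundedFormula α n) (i : ι) (v : α → G i) (xs : Fin n → G i) :
    φ.Realize (DirectLimit.of L ι G f i ∘ v) (DirectLimit.of L ι G f i ∘ xs) ↔
      φ.Realize v xs := by
  induction φ generalizing i with
  | falsum => rfl
  | equal t₁ t₂ =>
    simp only [BoundedFormula.Realize, ← Sum.comp_elim, HomClass.realize_term]
    exact (DirectLimit.of L ι G f i).injective.eq_iff
  | rel R ts =>
    simp only [BoundedFormula.Realize, ← Sum.comp_elim, HomClass.realize_term]
    exact (DirectLimit.of L ι G f i).map_rel R _
  | imp _ _ ih₁ ih₂ => simp only [BoundedFormula.realize_imp, ih₁, ih₂]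
  | all φ ih =>
    refine ⟨fun h x => ?_, fun h z => ?_⟩
    · rw [← ih, Fin.comp_snoc]
      exact h _
    · obtain ⟨j, y, rfl⟩ := DirectLimit.exists_of z
      obtain ⟨k, hik, hjk⟩ := directed_of (· ≤ ·) i j
      obtain ⟨e, he⟩ := hf i k hik
      have of_eq : ⇑(DirectLimit.of L ι G f i) = DirectLimit.of L ι G f k ∘ e := by
        ext x
        rw [Function.comp_apply, ← e.coe_toEmbedding, he, DirectLimit.of_f]
      rw [← DirectLimit.of_f (hij := hjk), of_eq, Function.comp_assoc, Function.comp_assoc,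
        ← Fin.comp_snoc, ih]
      exact (e.map_boundedFormula φ.all v xs).2 h _

/-- **Tarski's elementary chain theorem**: the maps from a directed system of elementary embeddings
to its direct limit are elementary. -/
noncomputable def directLimitElementaryOf
    (hf : ∀ i j h, ∃ e : G i ↪ₑ[L] G j, e.toEmbedding = f i j h) (i : ι) :
    G i ↪ₑ[L] Language.DirectLimit G f where
  toFun := DirectLimit.of L ι G f i
  map_formula' _ φ x := by
    rw [Formula.Realize, ← Subsingleton.elim (DirectLimit.of L ι G f i ∘ default) default]
    exact realize_comp_directLimit_of hf φ i x default

end DirectLimit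

theorem exists_toEmbedding_eq_natLERec {G : ℕ → Type*} [∀ k, L.Structure (G k)]
    (s : ∀ k, G k ↪ₑ[L] G (k + 1)) (i j : ℕ) (h : i ≤ j) :
    ∃ e : G i ↪ₑ[L] G j,
      e.toEmbedding = DirectedSystem.natLERec (fun k => (s k).toEmbedding) i j h := by
  induction j, h using Nat.le_induction with
  | base =>
    refine ⟨.refl L _, ?_⟩
    rw [DirectedSystem.natLERec, Nat.leRecOn_self]
    rfl
  | succ j h ih =>
    obtain ⟨e, he⟩ := ih
    refine ⟨(s j).comp e, ?_⟩
    rw [DirectedSystem.natLERec, Nat.leRecOn_succ h]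
    exact congrArg (s j).toEmbedding.comp he

theorem exists_limit_of_elementaryChain {G : ℕ → Type u₃} [∀ k, L.Structure (G k)]
    (s : ∀ k, G k ↪ₑ[L] G (k + 1)) :
    ∃ (H : Type u₃) (_ : L.Structure H) (g : ∀ k, G k ↪ₑ[L] H),
      (∀ k, g (k + 1) ∘ s k = g k) ∧
        ∀ (n : ℕ) (v : Fin n → H), ∃ (k : ℕ) (y : Fin n → G k), v = g k ∘ y := by
  let f := DirectedSystem.natLERec fun k => (s k).toEmbedding
  refine ⟨Language.DirectLimit G f, inferInstance,
    directLimitElementaryOf (exists_toEmbedding_eq_natLERec s), fun k => ?_, fun n v => ?_⟩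
  · have f_succ : f k (k + 1) k.le_succ = (s k).toEmbedding :=
      Nat.leRecOn_succ' (C := fun j => G k ↪[L] G j) (Embedding.refl L _)
    ext x
    have of_f_succ := DirectLimit.of_f (G := G) (f := f) (hij := k.le_succ) (x := x)
    rwa [f_succ] at of_f_succ
  · exact DirectLimit.exists_quotient_mk'_sigma_mk'_eq G f v

end ElementaryChain

section Saturation

/-- `G` is `ω`-saturated: it realizes every `1`-type over a finite tuple of `G`. Such a type is
presented as the type of an element `c` of an elementary extension `N` of `G`. -/
def IsOmegaSaturated (L : FirstOrder.Language.{u₁, u₂}) (G : Type u₃) [L.Structure G] : Prop :=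
  ∀ (N : Type u₃) [L.Structure N] (f : G ↪ₑ[L] N) (n : ℕ) (v : Fin n → G) (c : N), ∃ b : G,
    SameType L (Fin.snoc v b : Fin (n + 1) → G) (Fin.snoc (f ∘ v) c : Fin (n + 1) → N)

theorem elim_comp_snoc_inl_inr {α β : Type*} {n : ℕ} (f : α → β) (v : Fin n → α) (c : β) :
    Sum.elim f (fun _ => c) ∘ (Fin.snoc (Sum.inl ∘ v) (Sum.inr ()) : Fin (n + 1) → α ⊕ Unit) =
      (Fin.snoc (f ∘ v) c : Fin (n + 1) → β) := by
  rw [Fin.comp_snoc, ← Function.comp_assoc, Sum.elim_comp_inl, Sum.elim_inr]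

theorem exists_isOmegaSaturated (L : FirstOrder.Language.{u, u}) (A : Type u)
    [SA : L.Structure A] :
    ∃ (G : Type u) (_ : L.Structure G) (_ : A ↪ₑ[L] G), IsOmegaSaturated L G := by
  choose P SP s hs using fun (M : Type u) (SM : L.Structure M) =>
    exists_elementaryExtension_realizing_types L M
  let chain : ℕ → Σ M : Type u, L.Structure M :=
    Nat.rec ⟨A, SA⟩ fun _ M => ⟨P M.1 M.2, SP M.1 M.2⟩
  let _ (k : ℕ) : L.Structure (chain k).1 := (chain k).2
  let step (k : ℕ) : (chain k).1 ↪ₑ[L] (chain (k + 1)).1 := s (chain k).1 (chain k).2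
  obtain ⟨G, SG, g, hg, exists_stage⟩ := exists_limit_of_elementaryChain step
  refine ⟨G, SG, g 0, fun N SN f n v c => ?_⟩
  obtain ⟨k, y, rfl⟩ := exists_stage n v
  obtain ⟨b, hb⟩ := hs (chain k).1 (chain k).2 N (f.comp (g k)) c
  refine ⟨g (k + 1) b, ?_⟩
  have sameType_stage : SameType L (Fin.snoc (step k ∘ y) b : Fin (n + 1) → (chain (k + 1)).1)
      (Fin.snoc (f ∘ g k ∘ y) c : Fin (n + 1) → N) := by
    simpa only [elim_comp_snoc_inl_inr] using!
      hb.comp (Fin.snoc (Sum.inl ∘ y) (Sum.inr ()) : Fin (n + 1) → (chain k).1 ⊕ Unit)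
  have comp_snoc : g (k + 1) ∘ (Fin.snoc (step k ∘ y) b : Fin (n + 1) → (chain (k + 1)).1) =
      (Fin.snoc (g k ∘ y) (g (k + 1) b) : Fin (n + 1) → G) := by
    rw [Fin.comp_snoc, ← Function.comp_assoc, hg]
  exact comp_snoc ▸ (SameType.of_elementaryEmbedding (g (k + 1)) _).symm.trans sameType_stage

end Saturation

section Forcing

variable {L : FirstOrder.Language.{u, u}} {n : ℕ} {M N : Type u} [SM : L.Structure M]
  [SN : L.Structure N]

theorem Forces.mono {ψ : InfForm L n} {v : Fin n → M} (h : Forces ψ M SM v) (f : M ↪ₑ[L] N) :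
    Forces ψ N SN (f ∘ v) := by
  induction ψ with
  | equal t₁ t₂ =>
    simp only [Forces, HomClass.realize_term] at h ⊢
    rw [h]
  | rel R ts =>
    simp only [Forces, HomClass.realize_term] at h ⊢
    exact (f.map_rel R _).2 h
  | not φ => exact fun P SP g => h P SP (g.comp f)
  | disj Φ ih => exact h.imp fun i hi => ih i hi
  | conj Φ => exact fun P SP g => h P SP (g.comp f)
  | ex φ ih =>
    obtain ⟨b, hb⟩ := h
    refine ⟨f b, ?_⟩
    rw [← Fin.comp_snoc]
    exact ih hb
  | all φ => exact fun P SP g => h P SP (g.comp f)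

theorem Forces.exists_forces_of_sameType {φ : InfForm L n} {v : Fin n → M} {w : Fin n → N}
    (h : Forces φ M SM v) (hvw : SameType L v w) :
    ∃ (P : Type u) (SP : L.Structure P) (g : N ↪ₑ[L] P), Forces φ P SP (g ∘ w) :=
  have ⟨P, SP, f, g, hfg⟩ := hvw.exists_amalgam
  ⟨P, SP, g, hfg ▸ h.mono f⟩

theorem Forces.not_forces_not {φ : InfForm L n} {v : Fin n → M} {w : Fin n → N}
    (h : Forces φ M SM v) (hvw : SameType L v w) : ¬ Forces φ.not N SN w := fun hnot =>
  have ⟨P, SP, g, hP⟩ := h.exists_forces_of_sameType hvw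
  hnot P SP g hP

theorem decides_equal (t₁ t₂ : L.Term (Fin n)) (v : Fin n → M) :
    Decides (.equal t₁ t₂) M SM v := by
  refine or_iff_not_imp_left.2 fun h P SP f hP => h ?_
  change t₁.realize (f ∘ v) = t₂.realize (f ∘ v) at hP
  rw [HomClass.realize_term, HomClass.realize_term] at hP
  exact f.injective hP

theorem decides_rel {l : ℕ} (R : L.Relations l) (ts : Fin l → L.Term (Fin n)) (v : Fin n → M) :
    Decides (.rel R ts) M SM v := by
  refine or_iff_not_imp_left.2 fun h P SP f hP => h ?_
  change Structure.RelMap R (fun i => (ts i).realize (f ∘ v)) at hP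
  simp only [HomClass.realize_term] at hP
  exact (f.map_rel R _).1 hP

theorem Decides.not {φ : InfForm L n} {v : Fin n → M} (h : Decides φ M SM v) :
    Decides φ.not M SM v :=
  h.symm.imp id fun hφ P SP f hP => hP P SP (.refl L P) (hφ.mono f)

theorem Decides.disj {ι : Type u} {Φ : ι → InfForm L n} {v : Fin n → M}
    (h : ∀ i, Decides (Φ i) M SM v) : Decides (.disj Φ) M SM v :=
  or_iff_not_imp_left.2 fun hΦ P SP f ⟨i, hi⟩ =>
    (h i).resolve_left (fun hi' => hΦ ⟨i, hi'⟩) P SP f hi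

theorem Decides.conj {ι : Type u} {Φ : ι → InfForm L n} {v : Fin n → M}
    (h : ∀ i, Decides (Φ i) M SM v) : Decides (.conj Φ) M SM v := by
  by_cases hΦ : ∀ i, Forces (Φ i) M SM v
  · exact .inl fun P SP f i => ⟨P, SP, .refl L P, (hΦ i).mono f⟩
  · obtain ⟨i, hi⟩ := not_forall.1 hΦ
    refine .inr fun P SP f hP => ?_
    obtain ⟨Q, SQ, g, hQ⟩ := hP P SP (.refl L P) i
    exact (h i).resolve_left hi Q SQ (g.comp f) hQ

theorem IsOmegaSaturated.decides_ex (hM : IsOmegaSaturated L M) {φ : InfForm L (n + 1)}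
    {v : Fin n → M} (h : ∀ b, Decides φ M SM (Fin.snoc v b)) : Decides φ.ex M SM v := by
  refine or_iff_not_imp_left.2 fun hex P SP f ⟨c, hc⟩ => ?_
  obtain ⟨b, hb⟩ := hM P f n v c
  exact hc.not_forces_not hb.symm ((h b).resolve_left fun hb' => hex ⟨b, hb'⟩)

theorem IsOmegaSaturated.decides_all (hM : IsOmegaSaturated L M) {φ : InfForm L (n + 1)}
    {v : Fin n → M} (h : ∀ b, Decides φ M SM (Fin.snoc v b)) : Decides φ.all M SM v := by
  by_cases hφ : ∀ b, Forces φ M SM (Fin.snoc v b)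
  · refine .inl fun P SP f c => ?_
    obtain ⟨b, hb⟩ := hM P f n v c
    obtain ⟨Q, SQ, g, hQ⟩ := (hφ b).exists_forces_of_sameType hb
    rw [Fin.comp_snoc] at hQ
    exact ⟨Q, SQ, g, hQ⟩
  · obtain ⟨b, hb⟩ := not_forall.1 hφ
    refine .inr fun P SP f hP => ?_
    obtain ⟨Q, SQ, g, hQ⟩ := hP P SP (.refl L P) (f b)
    refine (h b).resolve_left hb Q SQ (g.comp f) ?_
    change Forces φ Q SQ (g.comp f ∘ Fin.snoc v b)
    rw [Fin.comp_snoc]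
    exact hQ

theorem IsOmegaSaturated.decides (hM : IsOmegaSaturated L M) (ψ : InfForm L n) (v : Fin n → M) :
    Decides ψ M SM v := by
  induction ψ with
  | equal t₁ t₂ => exact decides_equal t₁ t₂ v
  | rel R ts => exact decides_rel R ts v
  | not φ ih => exact (ih v).not
  | disj Φ ih => exact .disj fun i => ih i v
  | conj Φ ih => exact .conj fun i => ih i v
  | ex φ ih => exact hM.decides_ex fun b => ih (Fin.snoc v b)
  | all φ ih => exact hM.decides_all fun b => ih (Fin.snoc v b)

end Forcing

theorem stmt9_general {L : FirstOrder.Language.{u, u}} (A : Type u) (SA : L.Structure A) :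
    ∃ (G : Type u) (SG : L.Structure G) (_ : ElemEmb A G SA SG),
      ∀ (n : ℕ) (ψ : InfForm L n) (v : Fin n → G), Decides ψ G SG v :=
  have ⟨G, SG, f, hG⟩ := exists_isOmegaSaturated L A
  ⟨G, SG, f, fun _ => hG.decides⟩

/-- Every structure has an `𝔸`-generic elementary extension, for any fragment `𝔸`:
an extension deciding every instance of every formula of `𝔸`. -/
theorem stmt9 {L : FirstOrder.Language.{u, u}} (𝔸 : ∀ n : ℕ, Set (InfForm L n))
    (h𝔸 : IsFragment L 𝔸) (A : Type u) (SA : L.Structure A) :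
    ∃ (G : Type u) (SG : L.Structure G) (_ : ElemEmb A G SA SG),
      IsGeneric 𝔸 G SG := by
  obtain ⟨G, SG, f, hG⟩ := stmt9_general A SA
  exact ⟨G, SG, f, fun n ψ _ => hG n ψ⟩

end InfinitaryForcing
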